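/- (Remainder estimate for potentials homogeneous of degree β, from the proof of Theorem 5) Let β ∈ (1, 3/2) and let V^{(L)} ∈ C^∞(ℝ^d;ℝ) satisfy V^{(L)}(x) = |x|^β·V^{(L)}(x/|x|) for all |x| ≥ 1. Fix t > 0 and define F(t,ξ) = ∫₀ᵗ V^{(L)}(sξ) ds − ( t^{1+β}/(1+β) )·V^{(L)}(ξ). Then for every multi-index α ∈ ℤ₊^d there is C_α > 0 such that |∂_ξ^α F(t,ξ)| ≤ C_α ⟨ξ⟩^{−1−|α|} for all ξ ∈ ℝ^d. -/

import Mathlib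

open Filter MeasureTheory
open scoped Topology BigOperators

noncomputable section

abbrev E (d : ℕ) := EuclideanSpace ℝ (Fin d)

/-- Japanese bracket `⟨x⟩ = (1+|x|²)^{1/2}`. -/
def jap {d : ℕ} (x : E d) : ℝ := Real.sqrt (1 + ‖x‖ ^ 2)

/-- Japanese bracket of a real number. -/
def japr (t : ℝ) : ℝ := Real.sqrt (1 + t ^ 2)

/-- The kinetic energy symbol `k(x,ξ) = (1/2) Σ a_{mn}(x) ξ_m ξ_n`. -/
def kk {d : ℕ} (a : Fin d → Fin d → E d → ℝ) (x ξ : E d) : ℝ :=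
  (1 / 2) * ∑ m : Fin d, ∑ n : Fin d, a m n x * ξ m * ξ n

/-- `(y, η)` solves the Hamilton equations for the Hamiltonian `h`. -/
def IsHamiltonSol {d : ℕ} (h : E d → E d → ℝ) (y η : ℝ → E d) : Prop :=
  ∀ t : ℝ, HasDerivAt y (gradient (h (y t)) (η t)) t ∧
    HasDerivAt η (-gradient (fun x => h x (η t)) (y t)) t

theorem aux_contDiff {H : Type} [NormedAddCommGroup H] [NormedSpace ℝ H] [ProperSpace H]
    (a b : ℝ) (n : ℕ) :
    ∀ {G : Type} [NormedAddCommGroup G] [NormedSpace ℝ G] [CompleteSpace G]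
    (f : H × ℝ → G), ContDiff ℝ n f → ContDiff ℝ n (fun x => ∫ s in a..b, f (x, s)) := by
  induction n with
  | zero =>
    intro G _ _ _ f hf
    have hc : Continuous f := hf.continuous
    refine contDiff_zero.2 ?_
    exact intervalIntegral.continuous_parametric_intervalIntegral_of_continuous'
      (f := fun x s => f (x, s)) (by exact hc) a b
  | succ n ih =>
    intro G _ _ _ f hf
    let f' : H × ℝ → H →L[ℝ] G := fun p => (fderiv ℝ f p).comp (ContinuousLinearMap.inl ℝ H ℝ)
    have hfd : ContDiff ℝ n (fderiv ℝ f) := hf.fderiv_right (by norm_cast)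
    have hf' : ContDiff ℝ n f' := hfd.clm_comp contDiff_const
    have hc : Continuous f := hf.continuous
    have hc' : Continuous f' := hf'.continuous
    have key : ∀ x₀ : H, HasFDerivAt (fun x => ∫ s in a..b, f (x, s))
        (∫ s in a..b, f' (x₀, s)) x₀ := by
      intro x₀
      have hK : IsCompact (Metric.closedBall x₀ 1 ×ˢ Set.uIcc a b) :=
        (isCompact_closedBall x₀ 1).prod isCompact_uIcc
      obtain ⟨C, hC⟩ := hK.exists_bound_of_continuousOn hc'.continuousOn
      refine intervalIntegral.hasFDerivAt_integral_of_dominated_of_fderiv_le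
        (F := fun x s => f (x, s)) (F' := fun x s => f' (x, s)) (bound := fun _ => C)
        (s := Metric.closedBall x₀ 1) (Metric.closedBall_mem_nhds x₀ one_pos) ?_ ?_ ?_ ?_ ?_ ?_
      · refine Eventually.of_forall fun x => ?_
        exact (hc.comp (Continuous.prodMk_right x)).aestronglyMeasurable
      · exact (hc.comp (Continuous.prodMk_right x₀)).intervalIntegrable a b
      · exact (hc'.comp (Continuous.prodMk_right x₀)).aestronglyMeasurable
      · refine Eventually.of_forall fun s hs x hx => ?_
        exact hC (x, s) ⟨hx, Set.uIoc_subset_uIcc hs⟩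
      · exact intervalIntegrable_const
      · refine Eventually.of_forall fun s hs x hx => ?_
        have h1 : HasFDerivAt f (fderiv ℝ f (x, s)) (x, s) :=
          (hf.differentiable (by norm_cast) (x, s)).hasFDerivAt
        have h2 : HasFDerivAt (fun e : H => (e, s)) (ContinuousLinearMap.inl ℝ H ℝ) x :=
          hasFDerivAt_prodMk_left x s
        exact h1.comp x h2
    have h3 : fderiv ℝ (fun x => ∫ s in a..b, f (x, s)) = fun x => ∫ s in a..b, f' (x, s) :=
      funext fun x => (key x).fderiv
    push_cast
    rw [contDiff_succ_iff_fderiv]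
    refine ⟨fun x => (key x).differentiableAt, by simp, ?_⟩
    rw [h3]
    exact ih f' hf'

theorem aux_hom {d : ℕ} {β : ℝ} {VL : E d → ℝ}
    (hhom : ∀ x : E d, 1 ≤ ‖x‖ → VL x = ‖x‖ ^ β * VL (‖x‖⁻¹ • x))
    {x : E d} {u : ℝ} (hu : 0 < u) (hx : 1 ≤ ‖x‖) (hux : 1 ≤ u * ‖x‖) :
    VL (u • x) = u ^ β * VL x := by
  have hx0 : 0 < ‖x‖ := by linarith
  have hn : ‖u • x‖ = u * ‖x‖ := by rw [norm_smul, Real.norm_of_nonneg hu.le]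
  rw [hhom (u • x) (by rw [hn]; exact hux), hhom x hx, hn, smul_smul,
    Real.mul_rpow hu.le hx0.le]
  have : (u * ‖x‖)⁻¹ * u = ‖x‖⁻¹ := by field_simp
  rw [this, mul_assoc]

theorem aux_F {d : ℕ} {β : ℝ} (hβ1 : 1 < β) {VL : E d → ℝ} (hc : Continuous VL)
    (hhom : ∀ x : E d, 1 ≤ ‖x‖ → VL x = ‖x‖ ^ β * VL (‖x‖⁻¹ • x))
    {t : ℝ} (ht : 0 < t) {x : E d} {l : ℝ} (hl : 1 ≤ l) (hx : 1 ≤ ‖x‖) (htx : 1 ≤ t * ‖x‖) :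
    (∫ s in (0 : ℝ)..t, VL (s • (l • x))) - t ^ (1 + β) / (1 + β) * VL (l • x)
      = l⁻¹ * ((∫ s in (0 : ℝ)..t, VL (s • x)) - t ^ (1 + β) / (1 + β) * VL x) := by
  have hl0 : 0 < l := by linarith
  have hI : ∀ a b : ℝ, IntervalIntegrable (fun s : ℝ => VL (s • x)) volume a b := fun a b =>
    (hc.comp (continuous_id.smul continuous_const)).intervalIntegrable a b
  have h1 : (∫ s in (0 : ℝ)..t, VL (s • (l • x))) = l⁻¹ * ∫ s in (0 : ℝ)..(t * l), VL (s • x) := by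
    have := intervalIntegral.integral_comp_mul_right (a := 0) (b := t)
      (fun s : ℝ => VL (s • x)) hl0.ne'
    simp only [zero_mul, smul_eq_mul] at this
    rw [← this]
    simp only [smul_smul]
  have h2 : (∫ s in t..(t * l), VL (s • x)) = ∫ s in t..(t * l), s ^ β * VL x := by
    refine intervalIntegral.integral_congr fun s hs => ?_
    rw [Set.uIcc_of_le (by nlinarith)] at hs
    have hs1 := hs.1
    exact aux_hom hhom (by linarith) hx (by nlinarith)
  have h3 : (∫ s in t..(t * l), s ^ β * VL x)
      = ((t * l) ^ (β + 1) - t ^ (β + 1)) / (β + 1) * VL x := by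
    rw [intervalIntegral.integral_mul_const, integral_rpow (Or.inl (by linarith))]
  rw [h1, ← intervalIntegral.integral_add_adjacent_intervals (hI 0 t) (hI t (t * l)), h2, h3,
    aux_hom hhom hl0 hx (by nlinarith), Real.mul_rpow ht.le hl0.le, Real.rpow_add_one hl0.ne',
    add_comm 1 β]
  have : β + 1 ≠ 0 := by linarith
  field_simp
  ring

/-- Remainder estimate for potentials homogeneous of degree `β` (proof of Theorem 5). -/
theorem stmt18 (d : ℕ) (hd : 1 ≤ d) (β : ℝ) (hβ1 : 1 < β) (hβ2 : β < 3 / 2)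
    (VL : E d → ℝ) (hVL : ContDiff ℝ (⊤ : ℕ∞) VL)
    (hhom : ∀ x : E d, 1 ≤ ‖x‖ → VL x = ‖x‖ ^ β * VL (‖x‖⁻¹ • x))
    (t : ℝ) (ht : 0 < t) :
    ∀ n : ℕ, ∃ C > 0, ∀ ξ : E d,
      ‖iteratedFDeriv ℝ n
          (fun ξ' => (∫ s in (0 : ℝ)..t, VL (s • ξ')) - t ^ (1 + β) / (1 + β) * VL ξ') ξ‖
        ≤ C * jap ξ ^ (-1 - (n : ℝ)) := by
  intro n
  set F : E d → ℝ :=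
    fun ξ' => (∫ s in (0 : ℝ)..t, VL (s • ξ')) - t ^ (1 + β) / (1 + β) * VL ξ' with hF
  have hVn : ContDiff ℝ n VL := hVL.of_le (by exact_mod_cast (le_top : (n : ℕ∞) ≤ ⊤))
  have hFc : ContDiff ℝ n F := by
    refine ContDiff.sub ?_ (contDiff_const.mul hVn)
    exact aux_contDiff 0 t n (fun p : E d × ℝ => VL (p.2 • p.1))
      (hVn.comp (contDiff_snd.smul contDiff_fst))
  have hDc : Continuous (iteratedFDeriv ℝ n F) := hFc.continuous_iteratedFDeriv le_rfl
  -- radius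
  set ρ : ℝ := 2 + t⁻¹ with hρ
  have hti : 0 < t⁻¹ := inv_pos.2 ht
  have hρ0 : 0 < ρ := by positivity
  obtain ⟨M, hM⟩ := (isCompact_closedBall (0 : E d) ρ).exists_bound_of_continuousOn
    hDc.continuousOn
  have hM0 : 0 ≤ M := (norm_nonneg _).trans (hM 0 (by simp [hρ0.le]))
  -- main scaling bound
  have hscale : ∀ (x : E d) (l : ℝ), 1 ≤ l → ‖x‖ = ρ →
      ‖iteratedFDeriv ℝ n F (l • x)‖ * l ^ n = l⁻¹ * ‖iteratedFDeriv ℝ n F x‖ := by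
    intro x l hl hx
    have hl0 : 0 < l := by linarith
    have hev : (fun y => F (l • y)) =ᶠ[𝓝 x] (l⁻¹ • F) := by
      have hopen : IsOpen {y : E d | 1 + t⁻¹ < ‖y‖} := isOpen_lt continuous_const continuous_norm
      filter_upwards [hopen.mem_nhds (by show 1 + t⁻¹ < ‖x‖; rw [hx, hρ]; linarith)] with y hy
      have hy : 1 + t⁻¹ < ‖y‖ := hy
      have h1 : 1 ≤ t * ‖y‖ := by
        have : t * t⁻¹ = 1 := mul_inv_cancel₀ ht.ne'
        nlinarith
      exact aux_F hβ1 hVL.continuous hhom ht hl (by linarith) h1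
    have h1 := (hev.iteratedFDeriv ℝ n).eq_of_nhds
    rw [iteratedFDeriv_const_smul_apply hFc.contDiffAt] at h1
    have h2 := congrFun (iteratedFDeriv_comp_const_smul (i := n) l hFc) x
    rw [h2] at h1
    have h3 := congrArg norm h1
    rw [norm_smul, norm_smul, Real.norm_of_nonneg (by positivity),
      Real.norm_of_nonneg (by positivity)] at h3
    rw [mul_comm]; exact h3
  have hmain : ∀ ξ : E d, ∃ l : ℝ, 1 ≤ l ∧ jap ξ ≤ (1 + ρ) * l ∧
      ‖iteratedFDeriv ℝ n F ξ‖ ≤ M * l ^ (-1 - (n : ℝ)) := by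
    intro ξ
    have hj : jap ξ ≤ 1 + ‖ξ‖ := by
      unfold jap
      rw [Real.sqrt_le_left (by positivity)]
      nlinarith [norm_nonneg ξ]
    by_cases h : ‖ξ‖ ≤ ρ
    · exact ⟨1, le_rfl, by linarith, by simpa using hM ξ (by simpa using h)⟩
    · push Not at h
      have hl : 1 ≤ ‖ξ‖ / ρ := by rw [le_div_iff₀ hρ0]; linarith
      have hl0 : 0 < ‖ξ‖ / ρ := by linarith
      have hρl : ρ * (‖ξ‖ / ρ) = ‖ξ‖ := by field_simp
      generalize ‖ξ‖ / ρ = l at hl hl0 hρl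
      refine ⟨l, hl, by nlinarith, ?_⟩
      have hx : ‖l⁻¹ • ξ‖ = ρ := by
        rw [norm_smul, Real.norm_of_nonneg (by positivity), ← hρl]; field_simp
      have h1 := hscale (l⁻¹ • ξ) l hl hx
      rw [smul_inv_smul₀ hl0.ne'] at h1
      have h2 := hM (l⁻¹ • ξ) (by simpa using hx.le)
      have h3 : l ^ (-1 - (n : ℝ)) = l⁻¹ * (l ^ n)⁻¹ := by
        rw [sub_eq_add_neg, Real.rpow_add hl0, Real.rpow_neg_one, Real.rpow_neg hl0.le,
          Real.rpow_natCast]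
      have h4 : ‖iteratedFDeriv ℝ n F ξ‖
          = l⁻¹ * ‖iteratedFDeriv ℝ n F (l⁻¹ • ξ)‖ * (l ^ n)⁻¹ := by
        rw [← h1]; field_simp
      rw [h4, h3]
      calc l⁻¹ * ‖iteratedFDeriv ℝ n F (l⁻¹ • ξ)‖ * (l ^ n)⁻¹ ≤ l⁻¹ * M * (l ^ n)⁻¹ := by gcongr
        _ = _ := by ring
  have hexp : (-1 - (n : ℝ)) ≤ 0 := by
    have : (0 : ℝ) ≤ n := Nat.cast_nonneg n
    linarith
  refine ⟨(M + 1) * ((1 + ρ) ^ (-1 - (n : ℝ)))⁻¹, by positivity, fun ξ => ?_⟩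
  obtain ⟨l, hl, hj, hb⟩ := hmain ξ
  have hl0 : 0 < l := by linarith
  have hjp : 0 < jap ξ := by unfold jap; positivity
  have h5 := Real.rpow_le_rpow_of_nonpos hjp hj hexp
  rw [Real.mul_rpow (by positivity) hl0.le] at h5
  have hp : 0 < (1 + ρ) ^ (-1 - (n : ℝ)) := by positivity
  have hlp : 0 < l ^ (-1 - (n : ℝ)) := by positivity
  have h6 : l ^ (-1 - (n : ℝ)) ≤ ((1 + ρ) ^ (-1 - (n : ℝ)))⁻¹ * jap ξ ^ (-1 - (n : ℝ)) := by
    rw [inv_mul_eq_div, le_div_iff₀ hp, mul_comm]; exact h5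
  calc ‖iteratedFDeriv ℝ n F ξ‖ ≤ M * l ^ (-1 - (n : ℝ)) := hb
    _ ≤ (M + 1) * l ^ (-1 - (n : ℝ)) := by gcongr; linarith
    _ ≤ (M + 1) * (((1 + ρ) ^ (-1 - (n : ℝ)))⁻¹ * jap ξ ^ (-1 - (n : ℝ))) := by gcongr
    _ = _ := by ring
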